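/- For every real x and every real t, ∑_{n=0}^∞ (t^n/n!) h_n(x) = e^{x t} · ₕe(t), i.e. the exponential generating function of the harmonic polynomials is e^{xt} times the harmonic based exponential function evaluated at t. -/

import Mathlib

open Real MeasureTheory

/-- The `n`-th harmonic number `h_n = ∑_{r=1}^n 1/r`. -/
noncomputable def harm (n : ℕ) : ℝ := ∑ r ∈ Finset.range n, 1 / (r + 1 : ℝ)

/-- The harmonic based exponential function `ₕe(x) = 1 + ∑_{n=1}^∞ h_n x^n / n!`. -/
noncomputable def he (x : ℝ) : ℝ :=
  1 + ∑' n : ℕ, harm (n + 1) * x ^ (n + 1) / (Nat.factorial (n + 1) : ℝ)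

/-- The `n`-th harmonic polynomial `h_n(x) = x^n + ∑_{s=1}^n C(n,s) h_s x^{n-s}`. -/
noncomputable def hp (n : ℕ) (x : ℝ) : ℝ :=
  x ^ n + ∑ s ∈ Finset.Icc 1 n, (n.choose s : ℝ) * harm s * x ^ (n - s)

/-- The coefficients of the series of `he`, with the convention `ĥ⁰ = 1`. -/
noncomputable def heCoeff (t : ℝ) (n : ℕ) : ℝ :=
  (if n = 0 then 1 else harm n) * t ^ n / (Nat.factorial n : ℝ)

lemma harm_nonneg (n : ℕ) : 0 ≤ harm n :=
  Finset.sum_nonneg fun r _ => by positivity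

lemma harm_le (n : ℕ) : harm n ≤ n := by
  have h : harm n ≤ ∑ r ∈ Finset.range n, (1 : ℝ) := by
    refine Finset.sum_le_sum fun r _ => ?_
    rw [div_le_one (by positivity)]
    have : (0 : ℝ) ≤ r := Nat.cast_nonneg r
    linarith
  simpa using h

lemma heCoeff_summable (t : ℝ) : Summable fun n => ‖heCoeff t n‖ := by
  refine Summable.of_nonneg_of_le (fun n => norm_nonneg _) (fun n => ?_)
    (Real.summable_pow_div_factorial (2 * |t|))
  have h2 : |(if n = 0 then 1 else harm n)| ≤ (2 : ℝ) ^ n := by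
    split_ifs with h
    · simp [h]
    · rw [abs_of_nonneg (harm_nonneg n)]
      refine (harm_le n).trans ?_
      exact_mod_cast (Nat.lt_two_pow_self (n := n)).le
  rw [heCoeff, Real.norm_eq_abs, abs_div, abs_mul, abs_pow, mul_pow, Nat.abs_cast]
  gcongr

lemma he_eq_tsum (t : ℝ) : he t = ∑' n, heCoeff t n := by
  rw [(heCoeff_summable t).of_norm.tsum_eq_zero_add]
  simp [he, heCoeff]

lemma hp_eq_sum (x : ℝ) (n : ℕ) :
    hp n x = ∑ s ∈ Finset.range (n + 1),
      (n.choose s : ℝ) * (if s = 0 then 1 else harm s) * x ^ (n - s) := by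
  rw [Finset.range_eq_Ico, Finset.sum_eq_sum_Ico_succ_bot (Nat.succ_pos n), hp]
  congr 1
  · simp
  · refine Finset.sum_congr (by ext; simp) fun s hs => ?_
    have : s ≠ 0 := by simp at hs; omega
    simp [this]

/-- `∑_{n=0}^∞ (t^n/n!) h_n(x) = e^{xt} ₕe(t)`. -/
theorem hp_generating_function (x t : ℝ) :
    (∑' n : ℕ, t ^ n / (Nat.factorial n : ℝ) * hp n x) = Real.exp (x * t) * he t := by
  have hg : Summable fun n : ℕ => ‖(x * t) ^ n / (Nat.factorial n : ℝ)‖ :=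
    (Real.summable_pow_div_factorial (x * t)).norm
  have he1 : Real.exp (x * t) = ∑' n : ℕ, (x * t) ^ n / (Nat.factorial n : ℝ) := by
    rw [Real.exp_eq_exp_ℝ, NormedSpace.exp_eq_tsum_div]
  rw [mul_comm, he_eq_tsum, he1,
    tsum_mul_tsum_eq_tsum_sum_range_of_summable_norm (heCoeff_summable t) hg]
  refine tsum_congr fun n => ?_
  rw [hp_eq_sum, Finset.mul_sum]
  refine Finset.sum_congr rfl fun s hs => ?_
  have hsn : s ≤ n := by simp at hs; omega
  obtain ⟨k, rfl⟩ := Nat.exists_eq_add_of_le hsn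
  rw [heCoeff, Nat.cast_choose ℝ hsn, Nat.add_sub_cancel_left]
  have h1 : (Nat.factorial s : ℝ) ≠ 0 := by positivity
  have h2 : (Nat.factorial k : ℝ) ≠ 0 := by positivity
  have h3 : (Nat.factorial (s + k) : ℝ) ≠ 0 := by positivity
  field_simp
  ring
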